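/- arXiv:1210.0450 — 4 statements merged into one kernel-verified Lean document; each statement's English description precedes it below -/
import Mathlib

section
/- Let n and n + δ both be perfect numbers. If δ ≥ 2 is even, then δ does not divide n. -/
/-!
By Euclid–Euler an even perfect number is `2 ^ k * (2 ^ (k + 1) - 1)` for some `k`, and these
numbers more than double from each one to the next. If an even `δ` divided `n`, then `n` and
`n + δ` would be two even perfect numbers with `n < n + δ ≤ 2 * n`.
-/

lemma sum_divisors_two_pow (k : ℕ) : ∑ d ∈ (2 ^ k).divisors, d = mersenne (k + 1) := by
  rw [Nat.sum_divisors_prime_pow Nat.prime_two, Nat.geomSum_eq le_rfl, Nat.div_one, mersenne]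

lemma eq_of_mul_sum_divisors_eq_succ_mul {M m : ℕ} (hM : 1 < M) (hm : 0 < m)
    (h : M * ∑ d ∈ m.divisors, d = (M + 1) * m) : m = M := by
  obtain ⟨j, rfl⟩ : M ∣ m := (by simp : M.Coprime (M + 1)).dvd_of_dvd_mul_left ⟨_, h.symm⟩
  have hj : 0 < j := Nat.pos_of_mul_pos_left hm
  have sum_proper : ∑ d ∈ (M * j).properDivisors, d = j := by
    rw [Nat.sum_divisors_eq_sum_properDivisors_add_self] at h
    exact Nat.eq_of_mul_eq_mul_left (zero_lt_one.trans hM) (by linarith)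
  have one_or_self : j = 1 ∨ j = M * j := by
    simpa only [sum_proper, dvd_mul_left, forall_const] using
      Nat.sum_properDivisors_dvd (n := M * j)
  rcases one_or_self with j_eq_one | j_eq_self
  · rw [j_eq_one, mul_one]
  · exact absurd j_eq_self (lt_mul_left hj hM).ne

theorem exists_eq_two_pow_mul_mersenne_of_even_of_perfect {n : ℕ} (heven : Even n)
    (hn : n.Perfect) : ∃ k, n = 2 ^ k * mersenne (k + 1) := by
  obtain ⟨k, m, hm, rfl⟩ := Nat.exists_eq_two_pow_mul_odd hn.2.ne'
  have hk : k ≠ 0 := by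
    rintro rfl
    exact Nat.not_even_iff_odd.2 hm (by simpa only [pow_zero, one_mul] using heven)
  have mersenne_mul_sum : mersenne (k + 1) * ∑ d ∈ m.divisors, d = (mersenne (k + 1) + 1) * m := by
    have hcop : (2 ^ k).Coprime m := (Nat.coprime_two_left.2 hm).pow_left k
    rw [← sum_divisors_two_pow, ← hcop.sum_divisors_mul,
      (Nat.perfect_iff_sum_divisors_eq_two_mul hn.2).1 hn, sum_divisors_two_pow, succ_mersenne,
      pow_succ', mul_assoc]
  refine ⟨k, congrArg (2 ^ k * ·) ?_⟩
  exact eq_of_mul_sum_divisors_eq_succ_mul (one_lt_mersenne.2 (by omega)) hm.pos mersenne_mul_sum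

lemma two_mul_two_pow_mul_mersenne_lt {a b : ℕ} (h : a < b) :
    2 * (2 ^ a * mersenne (a + 1)) < 2 ^ b * mersenne (b + 1) :=
  calc 2 * (2 ^ a * mersenne (a + 1))
    _ = 2 ^ (a + 1) * mersenne (a + 1) := by rw [pow_succ', mul_assoc]
    _ ≤ 2 ^ b * mersenne (a + 1) := by gcongr <;> omega
    _ < 2 ^ b * mersenne (b + 1) := by gcongr

theorem two_mul_lt_of_even_perfect_of_lt {m n : ℕ} (hm_even : Even m) (hm : m.Perfect)
    (hn_even : Even n) (hn : n.Perfect) (h : m < n) : 2 * m < n := by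
  obtain ⟨a, rfl⟩ := exists_eq_two_pow_mul_mersenne_of_even_of_perfect hm_even hm
  obtain ⟨b, rfl⟩ := exists_eq_two_pow_mul_mersenne_of_even_of_perfect hn_even hn
  rcases lt_trichotomy a b with hab | rfl | hba
  · exact two_mul_two_pow_mul_mersenne_lt hab
  · exact absurd h (lt_irrefl _)
  · have := two_mul_two_pow_mul_mersenne_lt hba
    omega

theorem stmt_1 (n δ : ℕ) (hδ : 2 ≤ δ) (heven : Even δ)
    (hn : Nat.Perfect n) (hnδ : Nat.Perfect (n + δ)) :
    ¬ δ ∣ n := by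
  intro hdvd
  have hn_even : Even n := heven.trans_dvd hdvd
  have δ_le_n : δ ≤ n := Nat.le_of_dvd hn.2 hdvd
  have two_mul_n_lt : 2 * n < n + δ :=
    two_mul_lt_of_even_perfect_of_lt hn_even hn (hn_even.add heven) hnδ (by omega)
  omega
end

section
/- If n and m are distinct perfect numbers, then |n - m| > 1; that is, two perfect numbers never differ by exactly 1. -/
/-!
A perfect number `n` is not `-1` modulo `3` or `4`: there every unit squares to `1` but `-1` is not
a square, so complementary divisors `d`, `n / d` with product `-1` are distinct and cancel, which
gives `2 n = σ(n) = 0` and hence `2 = 0`. If `n` and `n + 1` are both perfect, this leaves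
`3 ∣ n` and `n % 4 ∈ {0, 1}`. In the first case `n` is a multiple of the abundant number `12`.
In the second, `2` divides `n + 1` exactly once, so `σ(2) = 3` divides `2 (n + 1)`.
-/

open Finset

theorem sum_divisors_eq_two_mul_of_perfect {n : ℕ} (hn : n.Perfect) :
    ∑ d ∈ n.divisors, d = 2 * n :=
  (Nat.perfect_iff_sum_divisors_eq_two_mul hn.2).1 hn

section NegOneNotSquare

variable {R : Type*} [CommRing R] {n : ℕ}

theorem add_eq_zero_of_mul_eq_neg_one (h_units : ∀ u : Rˣ, u * u = 1) {a b : R}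
    (hab : a * b = -1) : a + b = 0 := by
  have ha_unit : IsUnit a := .of_mul_eq_one (-b) (by rw [mul_neg, hab, neg_neg])
  have ha_sq : a * a = 1 := by
    simpa only [Units.val_mul, IsUnit.unit_spec, Units.val_one]
      using congrArg Units.val (h_units ha_unit.unit)
  linear_combination a * hab - b * ha_sq

theorem sum_divisors_cast_eq_zero_of_cast_eq_neg_one (h_units : ∀ u : Rˣ, u * u = 1)
    (h_neg_one : ¬IsSquare (-1 : R)) (hn : (n : R) = -1) : ∑ d ∈ n.divisors, (d : R) = 0 := by
  have mul_complement : ∀ d ∈ n.divisors, (d : R) * (n / d : ℕ) = -1 := fun d hd ↦ by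
    rw [← Nat.cast_mul, Nat.mul_div_cancel' (Nat.dvd_of_mem_divisors hd), hn]
  refine sum_involution (fun d _ ↦ n / d) (fun d hd ↦ ?_) (fun d hd _ h_fixed ↦ ?_)
    (fun d hd ↦ ?_) (fun d hd ↦ ?_)
  · exact add_eq_zero_of_mul_eq_neg_one h_units (mul_complement d hd)
  · exact h_neg_one ⟨d, by simpa only [h_fixed] using (mul_complement d hd).symm⟩
  · exact Nat.mem_divisors.2
      ⟨Nat.div_dvd_of_dvd (Nat.dvd_of_mem_divisors hd), Nat.ne_zero_of_mem_divisors hd⟩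
  · exact Nat.div_div_self (Nat.dvd_of_mem_divisors hd) (Nat.ne_zero_of_mem_divisors hd)

theorem cast_ne_neg_one_of_perfect (h_units : ∀ u : Rˣ, u * u = 1)
    (h_neg_one : ¬IsSquare (-1 : R)) (hn : n.Perfect) : (n : R) ≠ -1 := by
  intro h_cast
  have h_two_mul : 2 * (n : R) = 0 := calc
    2 * (n : R) = ((∑ d ∈ n.divisors, d : ℕ) : R) := by
      rw [sum_divisors_eq_two_mul_of_perfect hn, Nat.cast_mul, Nat.cast_ofNat]
    _ = ∑ d ∈ n.divisors, (d : R) := Nat.cast_sum _ _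
    _ = 0 := sum_divisors_cast_eq_zero_of_cast_eq_neg_one h_units h_neg_one h_cast
  have h_one : (-1 : R) = 1 * 1 := by linear_combination h_two_mul - 2 * h_cast
  exact h_neg_one ⟨1, h_one⟩

end NegOneNotSquare

theorem mod_three_ne_two_of_perfect {n : ℕ} (hn : n.Perfect) : n % 3 ≠ 2 := fun h ↦
  cast_ne_neg_one_of_perfect (R := ZMod 3) (by decide) (by decide) hn
    (by rw [← ZMod.natCast_mod, h]; rfl)

theorem mod_four_ne_three_of_perfect {n : ℕ} (hn : n.Perfect) : n % 4 ≠ 3 := fun h ↦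
  cast_ne_neg_one_of_perfect (R := ZMod 4) (by decide) (by decide) hn
    (by rw [← ZMod.natCast_mod, h]; rfl)

theorem not_dvd_of_abundant_of_perfect {a n : ℕ} (ha : a.Abundant) (hn : n.Perfect) :
    ¬a ∣ n := fun h_dvd ↦
  have h_abundant : n < ∑ d ∈ n.properDivisors, d := ha.of_dvd h_dvd hn.2.ne'
  h_abundant.ne' hn.1

theorem sum_divisors_dvd_two_mul_of_perfect_mul {a b : ℕ} (hab : a.Coprime b)
    (h : (a * b).Perfect) : ∑ d ∈ a.divisors, d ∣ 2 * (a * b) := by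
  rw [← sum_divisors_eq_two_mul_of_perfect h, hab.sum_divisors_mul]
  exact dvd_mul_right _ _

theorem three_dvd_of_perfect_of_mod_four_eq_two {n : ℕ} (hn : n.Perfect) (h : n % 4 = 2) :
    3 ∣ n := by
  obtain ⟨k, rfl⟩ : 2 ∣ n := by omega
  have h_coprime : Nat.Coprime 2 k := Nat.coprime_two_left.2 (Nat.odd_iff.2 (by omega))
  have h_dvd : 3 ∣ 2 * (2 * k) := sum_divisors_dvd_two_mul_of_perfect_mul h_coprime hn
  omega

theorem not_perfect_succ_of_perfect {n : ℕ} (hn : n.Perfect) : ¬(n + 1).Perfect := by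
  intro hn_succ
  have h_three : n % 3 = 0 := by
    have := mod_three_ne_two_of_perfect hn
    have := mod_three_ne_two_of_perfect hn_succ
    omega
  have h_four : n % 4 = 0 ∨ n % 4 = 1 := by
    have := mod_four_ne_three_of_perfect hn
    have := mod_four_ne_three_of_perfect hn_succ
    omega
  rcases h_four with h_zero | h_one
  · exact not_dvd_of_abundant_of_perfect Nat.abundant_twelve hn (by omega)
  · have : 3 ∣ n + 1 := three_dvd_of_perfect_of_mod_four_eq_two hn_succ (by omega)
    omega

theorem stmt_3 (n m : ℕ) (hn : Nat.Perfect n) (hm : Nat.Perfect m) (hnm : n ≠ m) :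
    1 < ((n : ℤ) - m).natAbs := by
  have h_m_ne : m ≠ n + 1 := fun h ↦ not_perfect_succ_of_perfect hn (h ▸ hm)
  have h_n_ne : n ≠ m + 1 := fun h ↦ not_perfect_succ_of_perfect hm (h ▸ hn)
  omega
end

section
/- Every odd perfect number n satisfies n ≡ 1 (mod 4). -/
/-!
Suppose `n ≡ 3 (mod 4)`. Then `n` is not a square, so its divisors split into pairs `{d, n / d}` of
distinct numbers with product `≡ -1 (mod 4)`. Every unit mod `4` squares to `1`, so the members of a
pair are negatives of each other mod `4`, whence `4 ∣ σ(n)`. But `σ(n) = 2 * n ≡ 2 (mod 4)` when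
`n` is perfect.
-/

open scoped ArithmeticFunction.sigma

theorem sum_divisors_eq_zero_of_add_div_eq_zero {M : Type*} [AddCommMonoid M] {n : ℕ}
    (hn : ¬IsSquare n) {f : ℕ → M} (hf : ∀ d ∈ n.divisors, f d + f (n / d) = 0) :
    ∑ d ∈ n.divisors, f d = 0 := by
  have hn0 : n ≠ 0 := by
    rintro rfl
    exact hn IsSquare.zero
  refine Finset.sum_involution (fun d _ ↦ n / d) hf (fun d hd _ heq ↦ hn ⟨d, ?_⟩)
    (fun d hd ↦ Nat.mem_divisors.2 ⟨Nat.div_dvd_of_dvd (Nat.dvd_of_mem_divisors hd), hn0⟩)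
    (fun d hd ↦ Nat.div_div_self (Nat.dvd_of_mem_divisors hd) hn0)
  calc n = d * (n / d) := (Nat.mul_div_cancel' (Nat.dvd_of_mem_divisors hd)).symm
    _ = d * d := by rw [heq]

theorem eq_neg_of_mul_eq_neg_one {R : Type*} [CommRing R] (hR : ∀ u : Rˣ, u ^ 2 = 1) {a b : R}
    (hab : a * b = -1) : b = -a := by
  have ha : IsUnit a := .of_mul_eq_one (-b) (by rw [mul_neg, hab, neg_neg])
  have ha_sq : a ^ 2 = 1 := by
    obtain ⟨u, rfl⟩ := ha
    rw [← Units.val_pow_eq_pow_val, hR u, Units.val_one]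
  calc b = a ^ 2 * b := by rw [ha_sq, one_mul]
    _ = a * (a * b) := by ring
    _ = -a := by rw [hab, mul_neg_one]

theorem dvd_sigma_of_dvd_add_one {m n k : ℕ} (hm : ∀ u : (ZMod m)ˣ, u ^ 2 = 1)
    (hn : ¬IsSquare n) (hmn : m ∣ n + 1) (hk : Odd k) : m ∣ σ k n := by
  have hn_cast : (n : ZMod m) = -1 :=
    eq_neg_of_add_eq_zero_left (by exact_mod_cast (ZMod.natCast_eq_zero_iff (n + 1) m).2 hmn)
  rw [← ZMod.natCast_eq_zero_iff, ArithmeticFunction.sigma_apply, Nat.cast_sum]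
  refine sum_divisors_eq_zero_of_add_div_eq_zero hn fun d hd ↦ ?_
  have hpair : (d : ZMod m) * (n / d : ℕ) = -1 := by
    rw [← Nat.cast_mul, Nat.mul_div_cancel' (Nat.dvd_of_mem_divisors hd), hn_cast]
  rw [Nat.cast_pow, Nat.cast_pow, eq_neg_of_mul_eq_neg_one hm hpair, hk.neg_pow, add_neg_cancel]

theorem not_isSquare_of_mod_four_eq_three {n : ℕ} (hn : n % 4 = 3) : ¬IsSquare n := by
  rintro ⟨a, rfl⟩
  have ha : a % 4 < 4 := Nat.mod_lt a (by norm_num)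
  rw [Nat.mul_mod] at hn
  interval_cases a % 4 <;> contradiction

theorem four_dvd_sigma_of_mod_four_eq_three {n k : ℕ} (hn : n % 4 = 3) (hk : Odd k) :
    4 ∣ σ k n :=
  dvd_sigma_of_dvd_add_one (by decide) (not_isSquare_of_mod_four_eq_three hn) (by omega) hk

theorem stmt_9 (n : ℕ) (hodd : Odd n) (hn : Nat.Perfect n) :
    n % 4 = 1 := by
  have hsigma : σ 1 n = 2 * n := by
    rw [ArithmeticFunction.sigma_one_apply, (Nat.perfect_iff_sum_divisors_eq_two_mul hn.2).1 hn]
  refine (Nat.odd_mod_four_iff.1 (Nat.odd_iff.1 hodd)).resolve_right fun hn3 ↦ ?_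
  have hdvd : 4 ∣ σ 1 n := four_dvd_sigma_of_mod_four_eq_three hn3 odd_one
  omega
end

section
/- Let s be a natural number with s ≢ 2 (mod 3), let m = 12s + 11, b = 4m + 2 = 48s + 46, and δ = b(b-1)/2 = (24s+23)(48s+45). If n and n + δ are both perfect numbers, then n is odd and n + δ is even. -/
/-!
Suppose `n` is even. If `4 ∣ n`, then `n + δ ≡ 3 [MOD 4]`, so the divisors of `n + δ` pair off into
sums `d + e` with `d * e ≡ -1`, hence `d + e ≡ 0 [MOD 4]`. Thus `4 ∣ σ (n + δ) = 2 * (n + δ)`,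
although `n + δ` is odd. If `n ≡ 2 [MOD 4]`, then `σ 2 = 3` divides `σ n = 2 * n`, so `n` is a
multiple of the perfect number `6` and therefore equal to it. Now `3` exactly divides `n + δ`, and
the factor `σ 3 = 4` of `σ (n + δ)` leads to the same contradiction.
-/

theorem add_eq_zero_of_mul_eq_neg_one_s13 {R : Type*} [CommRing R] (hu : ∀ u : Rˣ, u * u = 1)
    {x y : R} (hxy : x * y = -1) : x + y = 0 := by
  have hx_unit : x * -y = 1 := by rw [mul_neg, hxy, neg_neg]
  have hx_sq : x * x = 1 := congrArg Units.val (hu (Units.mkOfMulEqOne x (-y) hx_unit))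
  linear_combination x * hxy - y * hx_sq

theorem dvd_sum_divisors_of_dvd_add_one {k n : ℕ} (hk : 2 < k) (hu : ∀ u : (ZMod k)ˣ, u * u = 1)
    (hn : k ∣ n + 1) : k ∣ ∑ d ∈ n.divisors, d := by
  have hn0 : n ≠ 0 := by
    rintro rfl
    exact absurd (Nat.le_of_dvd one_pos hn) (by lia)
  have cast_mul_div {d : ℕ} (hd : d ∈ n.divisors) : (d : ZMod k) * (n / d : ℕ) = -1 := by
    rw [← Nat.cast_mul, Nat.mul_div_cancel' (Nat.dvd_of_mem_divisors hd)]
    exact eq_neg_of_add_eq_zero_left (mod_cast (ZMod.natCast_eq_zero_iff (n + 1) k).2 hn)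
  have cast_add_div {d : ℕ} (hd : d ∈ n.divisors) : (d : ZMod k) + (n / d : ℕ) = 0 :=
    add_eq_zero_of_mul_eq_neg_one_s13 hu (cast_mul_div hd)
  have div_ne_self {d : ℕ} (hd : d ∈ n.divisors) : n / d ≠ d := by
    intro hfix
    have hmul := cast_mul_div hd
    have hadd := cast_add_div hd
    rw [hfix] at hmul hadd
    have two_eq_zero : ((2 : ℕ) : ZMod k) = 0 := by
      push_cast
      linear_combination 2 * hmul - d * hadd
    exact hk.not_ge (Nat.le_of_dvd two_pos ((ZMod.natCast_eq_zero_iff 2 k).1 two_eq_zero))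
  rw [← ZMod.natCast_eq_zero_iff, Nat.cast_sum]
  exact Finset.sum_involution (fun d _ ↦ n / d) (fun _ hd ↦ cast_add_div hd)
    (fun _ hd _ ↦ div_ne_self hd)
    (fun _ hd ↦ Nat.mem_divisors.2 ⟨Nat.div_dvd_of_dvd (Nat.dvd_of_mem_divisors hd), hn0⟩)
    (fun _ hd ↦ Nat.div_div_self (Nat.dvd_of_mem_divisors hd) hn0)

theorem four_dvd_sum_divisors_of_mod_four_eq_three {n : ℕ} (hn : n % 4 = 3) :
    4 ∣ ∑ d ∈ n.divisors, d :=
  dvd_sum_divisors_of_dvd_add_one (by norm_num) (by decide) (by lia)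

theorem even_of_perfect_of_mul_eq {n a b : ℕ} (hn : n.Perfect) (hab : a * b = n)
    (hcop : a.Coprime b) (ha : a % 4 = 3) : Even n := by
  have hσ := (Nat.perfect_iff_sum_divisors_eq_two_mul hn.2).1 hn
  have four_dvd : 4 ∣ 2 * n := by
    rw [← hσ, ← hab, hcop.sum_divisors_mul]
    exact (four_dvd_sum_divisors_of_mod_four_eq_three ha).mul_right _
  exact even_iff_two_dvd.2 (by lia)

theorem mul_sum_divisors_lt_sum_divisors_mul {a c : ℕ} (ha : a ≠ 0) (hc : 1 < c) :
    c * ∑ d ∈ a.divisors, d < ∑ d ∈ (c * a).divisors, d := by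
  have hc0 : c ≠ 0 := by lia
  have one_notMem : 1 ∉ a.divisors.image (c * ·) := by
    simp only [Finset.mem_image, mul_eq_one, hc.ne', false_and, and_false, exists_false,
      not_false_eq_true]
  have insert_subset : insert 1 (a.divisors.image (c * ·)) ⊆ (c * a).divisors := by
    have hca : c * a ≠ 0 := mul_ne_zero hc0 ha
    rw [Finset.insert_subset_iff, Finset.image_subset_iff]
    exact ⟨Nat.one_mem_divisors.2 hca, fun d hd ↦
      Nat.mem_divisors.2 ⟨mul_dvd_mul_left c (Nat.dvd_of_mem_divisors hd), hca⟩⟩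
  calc c * ∑ d ∈ a.divisors, d
      = ∑ d ∈ a.divisors.image (c * ·), d := by
        rw [Finset.mul_sum, Finset.sum_image (mul_right_injective₀ hc0).injOn]
    _ < ∑ d ∈ insert 1 (a.divisors.image (c * ·)), d := by
        rw [Finset.sum_insert one_notMem]
        lia
    _ ≤ ∑ d ∈ (c * a).divisors, d := Finset.sum_le_sum_of_subset insert_subset

theorem eq_of_perfect_of_dvd {a n : ℕ} (ha : a.Perfect) (hn : n.Perfect) (h : a ∣ n) : n = a := by
  have hσa := (Nat.perfect_iff_sum_divisors_eq_two_mul ha.2).1 ha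
  have hσn := (Nat.perfect_iff_sum_divisors_eq_two_mul hn.2).1 hn
  obtain ⟨c, rfl⟩ := h
  rw [mul_comm a c] at hσn hn ⊢
  have hc0 : 0 < c := Nat.pos_of_mul_pos_right hn.2
  obtain rfl | hc : c = 1 ∨ 1 < c := by lia
  · exact one_mul a
  · have hlt := mul_sum_divisors_lt_sum_divisors_mul ha.2.ne' hc
    rw [hσa, hσn] at hlt
    lia

theorem perfect_six : Nat.Perfect 6 := ⟨by decide, by norm_num⟩

theorem eq_six_of_perfect_of_mod_four_eq_two {n : ℕ} (hn : n.Perfect) (h : n % 4 = 2) : n = 6 := by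
  have hσ := (Nat.perfect_iff_sum_divisors_eq_two_mul hn.2).1 hn
  obtain ⟨m, rfl⟩ : 2 ∣ n := by lia
  have hm : Nat.Coprime 2 m := Nat.coprime_two_left.2 (Nat.odd_iff.2 (by lia))
  rw [hm.sum_divisors_mul, Nat.prime_two.sum_divisors] at hσ
  exact eq_of_perfect_of_dvd perfect_six hn (by lia)

theorem stmt_13_general {δ n : ℕ} (hδ4 : δ % 4 = 3) (hδ3 : 3 ∣ δ) (hδ9 : ¬ 9 ∣ 6 + δ)
    (hn : n.Perfect) (hnδ : (n + δ).Perfect) : Odd n ∧ Even (n + δ) := by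
  have hδ_odd : Odd δ := Nat.odd_iff.2 (by lia)
  have hodd : Odd n := by
    by_contra hn_odd
    have hn_even : Even n := Nat.not_odd_iff_even.1 hn_odd
    apply Nat.not_even_iff_odd.2 (hn_even.add_odd hδ_odd)
    obtain h4 | h4 : n % 4 = 0 ∨ n % 4 = 2 := by grind
    · exact even_of_perfect_of_mul_eq hnδ (mul_one _) (Nat.coprime_one_right _) (by lia)
    · obtain rfl := eq_six_of_perfect_of_mod_four_eq_two hn h4
      obtain ⟨k, hk⟩ : 3 ∣ 6 + δ := by lia
      have hk3 : Nat.Coprime 3 k := (Nat.Prime.coprime_iff_not_dvd Nat.prime_three).2 (by lia)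
      exact even_of_perfect_of_mul_eq hnδ hk.symm hk3 (by norm_num)
  exact ⟨hodd, hodd.add_odd hδ_odd⟩

theorem stmt_13 (s n : ℕ) (hs : s % 3 ≠ 2)
    (hn : Nat.Perfect n) (hnδ : Nat.Perfect (n + (24 * s + 23) * (48 * s + 45))) :
    Odd n ∧ Even (n + (24 * s + 23) * (48 * s + 45)) := by
  -- Here `6 + δ ≡ 6 * (s + 1) [MOD 9]`.
  exact stmt_13_general (by lia) (by lia) (by lia) hn hnδ
end
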